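/- Let G be a Moore graph of degree 57, let x, y be adjacent vertices of G, and let Γ be the induced subgraph of G on the vertices at distance 2 from both x and y. Let u, v, w be vertices of Γ with pairwise distances d(v,w) = d(u,w) = d(u,v) = 3 (distances in Γ). Then the number of vertices z of Γ with d(z,u) = d(z,v) = d(z,w) = 3 is 53. -/

import Mathlib

/-!
Call the common neighbors of two vertices of `Γ` that are not themselves vertices of `Γ` centers.
Every center is a neighbor of `x` or of `y`, and a vertex of `Γ` is adjacent to exactly one center
of each kind. This makes `Γ` a grid, whose lines are the neighborhoods of the centers.
Distinct vertices of `Γ` are at distance 3 exactly when they lie on a common line: the unique path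
of length 2 between them has then been deleted, and a path of length 3 remains.

Among the three centers joining `u`, `v`, `w` in pairs, two are of the same kind; they are adjacent
to a common vertex of `Γ`, so they coincide, and `u`, `v`, `w` lie on one line. The vertices
collinear with all three are the other points of this line, which misses exactly one neighbor of
its center.
-/

open SimpleGraph

section

variable {α : Type*} {G : SimpleGraph α}

/-- A Moore graph of diameter at most 2, in the local form that also makes sense for infinite
graphs: adjacent vertices have no common neighbor, and distinct non-adjacent vertices have exactly
one. Regularity is not included. -/
structure IsMooreGraph (G : SimpleGraph α) : Prop where
  commonNeighbors_eq_empty : ∀ ⦃a b : α⦄, G.Adj a b → G.commonNeighbors a b = ∅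
  existsUnique_mem_commonNeighbors :
    ∀ ⦃a b : α⦄, a ≠ b → ¬ G.Adj a b → ∃! c, c ∈ G.commonNeighbors a b

/-- The vertices at distance 2 from both `x` and `y`, i.e. the vertices of `Γ`. -/
def farSet (G : SimpleGraph α) (x y : α) : Set α :=
  {v | G.dist x v = 2 ∧ G.dist y v = 2}

/-- Collinearity of two distinct points of `S`, when the lines are the neighborhoods of the
vertices outside `S`. -/
def IsCollinear (G : SimpleGraph α) (S : Set α) (a b : α) : Prop :=
  a ≠ b ∧ ∃ c ∉ S, c ∈ G.commonNeighbors a b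

theorem farSet_comm (G : SimpleGraph α) (x y : α) : farSet G x y = farSet G y x :=
  Set.ext fun _ => and_comm

namespace IsMooreGraph

variable {x y a b c d u v w z t : α} {S : Set α}

theorem of_isSRGWith [Fintype α] [DecidableRel G.Adj] {n k : ℕ} (hG : G.IsSRGWith n k 0 1) :
    IsMooreGraph G where
  commonNeighbors_eq_empty a b hab :=
    Set.isEmpty_coe_sort.mp (Fintype.card_eq_zero_iff.mp (hG.of_adj a b hab))
  existsUnique_mem_commonNeighbors a b hne hab := by
    obtain ⟨c, hc⟩ := Fintype.card_eq_one_iff.mp (hG.of_not_adj hne hab)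
    exact ⟨c, c.2, fun d hd => congrArg Subtype.val (hc ⟨d, hd⟩)⟩

theorem not_adj_of_mem_commonNeighbors (hG : IsMooreGraph G) (hc : c ∈ G.commonNeighbors a b) :
    ¬ G.Adj a b := fun hab => by
  simp [hG.commonNeighbors_eq_empty hab] at hc

theorem eq_of_mem_commonNeighbors (hG : IsMooreGraph G) (hab : a ≠ b)
    (hc : c ∈ G.commonNeighbors a b) (hd : d ∈ G.commonNeighbors a b) : c = d :=
  (hG.existsUnique_mem_commonNeighbors hab (hG.not_adj_of_mem_commonNeighbors hc)).unique hc hd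

theorem dist_eq_two_iff (hG : IsMooreGraph G) : G.dist a b = 2 ↔ a ≠ b ∧ ¬ G.Adj a b := by
  rw [SimpleGraph.dist, ENat.toNat_eq_iff two_ne_zero, Nat.cast_ofNat, edist_eq_two_iff]
  exact ⟨fun h => ⟨h.1, h.2.1⟩, fun h =>
    ⟨h.1, h.2, (hG.existsUnique_mem_commonNeighbors h.1 h.2).exists⟩⟩

theorem mem_farSet_iff (hG : IsMooreGraph G) :
    z ∈ farSet G x y ↔ (x ≠ z ∧ ¬ G.Adj x z) ∧ y ≠ z ∧ ¬ G.Adj y z := by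
  simp only [farSet, Set.mem_ofPred_eq, hG.dist_eq_two_iff]

theorem two_lt_edist_induce_iff (hG : IsMooreGraph G) (z t : S) :
    2 < (G.induce S).edist z t ↔ IsCollinear G S z t := by
  rw [two_lt_edist_iff, Ne, ← Subtype.coe_inj]
  constructor
  · rintro ⟨hne, hadj, hempty⟩
    obtain ⟨c, hc, -⟩ := hG.existsUnique_mem_commonNeighbors hne hadj
    refine ⟨hne, c, fun hcS => ?_, hc⟩
    exact Set.eq_empty_iff_forall_notMem.mp hempty ⟨c, hcS⟩ hc
  · rintro ⟨hne, c, hcS, hc⟩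
    refine ⟨hne, hG.not_adj_of_mem_commonNeighbors hc, ?_⟩
    refine Set.eq_empty_iff_forall_notMem.mpr fun d hd => hcS ?_
    rw [hG.eq_of_mem_commonNeighbors hne hc hd]
    exact d.2

theorem isCollinear_of_dist_induce_eq_three (hG : IsMooreGraph G) {z t : S}
    (h : (G.induce S).dist z t = 3) : IsCollinear G S z t := by
  rw [← hG.two_lt_edist_induce_iff, ← (Reachable.of_dist_ne_zero (by lia)).coe_dist_eq_edist, h]
  norm_num

theorem adj_or_adj_of_notMem_farSet (hG : IsMooreGraph G) (hu : u ∈ farSet G x y)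
    (hc : c ∉ farSet G x y) (huc : G.Adj u c) : G.Adj x c ∨ G.Adj y c := by
  rw [hG.mem_farSet_iff] at hu hc
  have hxc : x ≠ c := by
    rintro rfl
    exact hu.1.2 huc.symm
  have hyc : y ≠ c := by
    rintro rfl
    exact hu.2.2 huc.symm
  tauto

theorem exists_neighborSet_sdiff_farSet_subset_pair (hG : IsMooreGraph G)
    (hu : u ∈ farSet G x y) : ∃ a b, G.neighborSet u \ farSet G x y ⊆ {a, b} := by
  obtain ⟨⟨hxu, hxu'⟩, hyu, hyu'⟩ := hG.mem_farSet_iff.mp hu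
  obtain ⟨a, -, ha⟩ := hG.existsUnique_mem_commonNeighbors hxu hxu'
  obtain ⟨b, -, hb⟩ := hG.existsUnique_mem_commonNeighbors hyu hyu'
  refine ⟨a, b, fun c ⟨huc, hc⟩ => ?_⟩
  exact (hG.adj_or_adj_of_notMem_farSet hu hc huc).imp
    (fun hxc => ha c ⟨hxc, huc⟩) (fun hyc => hb c ⟨hyc, huc⟩)

theorem neighborSet_sdiff_farSet_eq_singleton (hG : IsMooreGraph G) (hxy : G.Adj x y)
    (hxc : G.Adj x c) (hyc : y ≠ c) : G.neighborSet c \ farSet G x y = {x} := by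
  ext z
  simp only [Set.mem_sdiff, mem_neighborSet, Set.mem_singleton_iff]
  constructor
  · rintro ⟨hcz, hz⟩
    by_contra! hzx
    refine hz (hG.mem_farSet_iff.mpr ⟨⟨hzx.symm, ?_⟩, ?_, fun hyz => hzx ?_⟩)
    · exact hG.not_adj_of_mem_commonNeighbors ⟨hxc, hcz.symm⟩
    · rintro rfl
      exact hG.not_adj_of_mem_commonNeighbors ⟨hxc, hcz.symm⟩ hxy
    · exact hG.eq_of_mem_commonNeighbors hyc ⟨hyz, hcz⟩ ⟨hxy.symm, hxc.symm⟩
  · rintro rfl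
    exact ⟨hxc.symm, fun h => (hG.mem_farSet_iff.mp h).1.1 rfl⟩

theorem exists_neighborSet_sdiff_farSet_eq_singleton (hG : IsMooreGraph G) (hxy : G.Adj x y)
    (hu : u ∈ farSet G x y) (hc : c ∉ farSet G x y) (huc : G.Adj u c) :
    ∃ o, G.neighborSet c \ farSet G x y = {o} := by
  have hu' := hG.mem_farSet_iff.mp hu
  rcases hG.adj_or_adj_of_notMem_farSet hu hc huc with hxc | hyc
  · refine ⟨x, hG.neighborSet_sdiff_farSet_eq_singleton hxy hxc ?_⟩
    rintro rfl
    exact hu'.2.2 huc.symm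
  · rw [farSet_comm]
    refine ⟨y, hG.neighborSet_sdiff_farSet_eq_singleton hxy.symm hyc ?_⟩
    rintro rfl
    exact hu'.1.2 huc.symm

theorem exists_mem_commonNeighbors_ne (hG : IsMooreGraph G) (hzt : z ≠ t)
    (hc : c ∈ G.commonNeighbors z t) (hza : G.Adj z a) (hac : a ≠ c) :
    ∃ q ∈ G.commonNeighbors a t, q ≠ c := by
  have hat : a ≠ t := by
    rintro rfl
    exact hG.not_adj_of_mem_commonNeighbors hc hza
  have hat' : ¬ G.Adj a t := fun h =>
    hac (hG.eq_of_mem_commonNeighbors hzt ⟨hza, h.symm⟩ hc)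
  obtain ⟨q, hq, -⟩ := hG.existsUnique_mem_commonNeighbors hat hat'
  refine ⟨q, hq, ?_⟩
  rintro rfl
  exact hG.not_adj_of_mem_commonNeighbors ⟨hc.1, hq.1⟩ hza

theorem nontrivial_neighborSet_inter_farSet (hG : IsMooreGraph G) (hu : u ∈ farSet G x y)
    (hdeg : 4 ≤ (G.neighborSet u).encard) : (G.neighborSet u ∩ farSet G x y).Nontrivial := by
  obtain ⟨a, b, hab⟩ := hG.exists_neighborSet_sdiff_farSet_subset_pair hu
  have hdiff : (G.neighborSet u \ farSet G x y).encard ≤ 2 :=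
    calc
      _ ≤ ({a, b} : Set α).encard := Set.encard_le_encard hab
      _ ≤ ({b} : Set α).encard + 1 := Set.encard_insert_le {b} a
      _ = 2 := by rw [Set.encard_singleton, one_add_one_eq_two]
  rw [← Set.encard_sdiff_add_encard_inter _ (farSet G x y)] at hdeg
  rw [← Set.one_lt_encard_iff_nontrivial]
  by_contra! hle
  exact absurd (hdeg.trans (add_le_add hdiff hle)) (by norm_num)

theorem exists_adj_adj_adj_of_isCollinear (hG : IsMooreGraph G) (hz : z ∈ farSet G x y)
    (ht : t ∈ farSet G x y) (hdeg : 4 ≤ (G.neighborSet z).encard)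
    (hzt : IsCollinear G (farSet G x y) z t) :
    ∃ p ∈ farSet G x y, ∃ q ∈ farSet G x y, G.Adj z p ∧ G.Adj p q ∧ G.Adj q t := by
  obtain ⟨hne, c, hc, hczt⟩ := hzt
  obtain ⟨p₁, ⟨hzp₁, hp₁⟩, p₂, ⟨hzp₂, hp₂⟩, hp⟩ := hG.nontrivial_neighborSet_inter_farSet hz hdeg
  obtain ⟨q₁, hq₁, hqc₁⟩ :=
    hG.exists_mem_commonNeighbors_ne hne hczt hzp₁ (ne_of_mem_of_not_mem hp₁ hc)
  obtain ⟨q₂, hq₂, hqc₂⟩ :=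
    hG.exists_mem_commonNeighbors_ne hne hczt hzp₂ (ne_of_mem_of_not_mem hp₂ hc)
  by_contra! hnone
  have hq₁_notMem : q₁ ∉ farSet G x y := fun h => hnone p₁ hp₁ q₁ h hzp₁ hq₁.1 hq₁.2.symm
  have hq₂_notMem : q₂ ∉ farSet G x y := fun h => hnone p₂ hp₂ q₂ h hzp₂ hq₂.1 hq₂.2.symm
  -- `t` has at most two neighbors outside `farSet G x y`, and one of them is `c`.
  have hq : q₁ = q₂ := by
    obtain ⟨a, b, hab⟩ := hG.exists_neighborSet_sdiff_farSet_subset_pair ht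
    have hcab := hab ⟨hczt.2, hc⟩
    have hq₁ab := hab ⟨hq₁.2, hq₁_notMem⟩
    have hq₂ab := hab ⟨hq₂.2, hq₂_notMem⟩
    grind
  subst hq
  have hzq : z ≠ q₁ := ne_of_mem_of_not_mem hz hq₁_notMem
  exact hp (hG.eq_of_mem_commonNeighbors hzq ⟨hzp₁, hq₁.1.symm⟩ ⟨hzp₂, hq₂.1.symm⟩)

theorem dist_induce_farSet_eq_three_iff (hG : IsMooreGraph G) {z t : farSet G x y}
    (hdeg : 4 ≤ (G.neighborSet (z : α)).encard) :
    (G.induce (farSet G x y)).dist z t = 3 ↔ IsCollinear G (farSet G x y) z t := by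
  refine ⟨hG.isCollinear_of_dist_induce_eq_three, fun h => ?_⟩
  obtain ⟨p, hp, q, hq, hzp, hpq, hqt⟩ := hG.exists_adj_adj_adj_of_isCollinear z.2 t.2 hdeg h
  have hzp' : (G.induce (farSet G x y)).Adj z ⟨p, hp⟩ := hzp
  have hpq' : (G.induce (farSet G x y)).Adj ⟨p, hp⟩ ⟨q, hq⟩ := hpq
  have hqt' : (G.induce (farSet G x y)).Adj ⟨q, hq⟩ t := hqt
  let path := Walk.cons hzp' (.cons hpq' (.cons hqt' .nil))
  have hle : (G.induce (farSet G x y)).dist z t ≤ 3 := dist_le path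
  have hlt := (hG.two_lt_edist_induce_iff z t).mpr h
  rw [← path.reachable.coe_dist_eq_edist, Nat.ofNat_lt_cast] at hlt
  exact le_antisymm hle hlt

theorem eq_of_adj_of_mem_farSet (hG : IsMooreGraph G) (hu : u ∈ farSet G x y)
    (huc : G.Adj u c) (hud : G.Adj u d)
    (h : (G.Adj x c ∧ G.Adj x d) ∨ (G.Adj y c ∧ G.Adj y d)) : c = d := by
  rw [hG.mem_farSet_iff] at hu
  rcases h with ⟨hxc, hxd⟩ | ⟨hyc, hyd⟩
  · exact hG.eq_of_mem_commonNeighbors hu.1.1 ⟨hxc, huc⟩ ⟨hxd, hud⟩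
  · exact hG.eq_of_mem_commonNeighbors hu.2.1 ⟨hyc, huc⟩ ⟨hyd, hud⟩

theorem exists_center_of_isCollinear (hG : IsMooreGraph G) (hu : u ∈ farSet G x y)
    (hv : v ∈ farSet G x y) (hw : w ∈ farSet G x y)
    (hvw : IsCollinear G (farSet G x y) v w) (huw : IsCollinear G (farSet G x y) u w)
    (huv : IsCollinear G (farSet G x y) u v) :
    ∃ c ∉ farSet G x y, G.Adj u c ∧ G.Adj v c ∧ G.Adj w c := by
  obtain ⟨-, a, ha, hva, hwa⟩ := hvw
  obtain ⟨-, b, hb, hub, hwb⟩ := huw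
  obtain ⟨-, c, hc, huc, hvc⟩ := huv
  -- Two of the three centers are adjacent to the same one of `x` and `y`.
  have hcenters : a = b ∨ a = c ∨ b = c := by
    have ha' := hG.adj_or_adj_of_notMem_farSet hv ha hva
    have hb' := hG.adj_or_adj_of_notMem_farSet hu hb hub
    have hc' := hG.adj_or_adj_of_notMem_farSet hu hc huc
    have hab := hG.eq_of_adj_of_mem_farSet hw hwa hwb
    have hac := hG.eq_of_adj_of_mem_farSet hv hva hvc
    have hbc := hG.eq_of_adj_of_mem_farSet hu hub huc
    grind
  rcases hcenters with rfl | rfl | rfl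
  · exact ⟨a, ha, hub, hva, hwa⟩
  · exact ⟨a, ha, huc, hva, hwa⟩
  · exact ⟨b, hb, hub, hvc, hwb⟩

theorem isCollinear_triple_iff_of_center (hG : IsMooreGraph G) (hz : z ∈ farSet G x y)
    (hu : u ∈ farSet G x y) (hv : v ∈ farSet G x y) (hc : c ∉ farSet G x y)
    (huc : G.Adj u c) (hvc : G.Adj v c) (hwc : G.Adj w c) (huv : u ≠ v) :
    IsCollinear G (farSet G x y) z u ∧ IsCollinear G (farSet G x y) z v ∧
        IsCollinear G (farSet G x y) z w ↔
      G.Adj z c ∧ z ≠ u ∧ z ≠ v ∧ z ≠ w := by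
  constructor
  · rintro ⟨hzu, hzv, hzw⟩
    refine ⟨?_, hzu.1, hzv.1, hzw.1⟩
    obtain ⟨d, -, hzd, hud, hvd⟩ :=
      hG.exists_center_of_isCollinear hz hu hv ⟨huv, c, hc, huc, hvc⟩ hzv hzu
    rwa [← hG.eq_of_mem_commonNeighbors huv ⟨hud, hvd⟩ ⟨huc, hvc⟩]
  · rintro ⟨hzc, hzu, hzv, hzw⟩
    exact ⟨⟨hzu, c, hc, hzc, huc⟩, ⟨hzv, c, hc, hzc, hvc⟩, ⟨hzw, c, hc, hzc, hwc⟩⟩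

theorem encard_line_add_one (hG : IsMooreGraph G) (hxy : G.Adj x y) (hu : u ∈ farSet G x y)
    (hc : c ∉ farSet G x y) (huc : G.Adj u c) :
    {z : farSet G x y | G.Adj z c}.encard + 1 = (G.neighborSet c).encard := by
  obtain ⟨o, ho⟩ := hG.exists_neighborSet_sdiff_farSet_eq_singleton hxy hu hc huc
  have himage : Subtype.val '' {z : farSet G x y | G.Adj z c} =
      G.neighborSet c ∩ farSet G x y := by
    ext z
    simp [adj_comm, and_comm]
  rw [← Set.encard_sdiff_add_encard_inter (G.neighborSet c) (farSet G x y), ho, ← himage,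
    Subtype.val_injective.encard_image, Set.encard_singleton, add_comm]

theorem encard_line_sdiff_add_four (hG : IsMooreGraph G) (hxy : G.Adj x y)
    (hc : c ∉ farSet G x y) {u v w : farSet G x y} (huc : G.Adj u c) (hvc : G.Adj v c)
    (hwc : G.Adj w c) (huv : u ≠ v) (huw : u ≠ w) (hvw : v ≠ w) :
    ({z : farSet G x y | G.Adj z c} \ {u, v, w}).encard + 4 = (G.neighborSet c).encard := by
  have hsubset : {u, v, w} ⊆ {z : farSet G x y | G.Adj z c} := by
    simp [Set.insert_subset_iff, huc, hvc, hwc]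
  have hthree : ({u, v, w} : Set (farSet G x y)).encard = 3 :=
    Set.encard_eq_three.mpr ⟨u, v, w, huv, huw, hvw, rfl⟩
  rw [← hG.encard_line_add_one hxy u.2 hc huc, ← Set.encard_sdiff_add_encard_of_subset hsubset,
    hthree, add_assoc, three_add_one_eq_four]

end IsMooreGraph

theorem encard_neighborSet_of_isRegularOfDegree [G.LocallyFinite] {k : ℕ}
    (hG : G.IsRegularOfDegree k) (a : α) : (G.neighborSet a).encard = k := by
  rw [← Set.coe_fintypeCard, card_neighborSet_eq_degree, hG a]

theorem moore57_x333_all_eq_three_general {k : ℕ∞} (hG : IsMooreGraph G)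
    (hk : ∀ a, (G.neighborSet a).encard = k) {x y : α} (hxy : G.Adj x y) (u v w : farSet G x y)
    (hvw : (G.induce (farSet G x y)).dist v w = 3) (huw : (G.induce (farSet G x y)).dist u w = 3)
    (huv : (G.induce (farSet G x y)).dist u v = 3) :
    {z | (G.induce (farSet G x y)).dist z u = 3 ∧ (G.induce (farSet G x y)).dist z v = 3 ∧
      (G.induce (farSet G x y)).dist z w = 3}.encard + 4 = k := by
  replace hvw := hG.isCollinear_of_dist_induce_eq_three hvw
  replace huw := hG.isCollinear_of_dist_induce_eq_three huw
  replace huv := hG.isCollinear_of_dist_induce_eq_three huv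
  obtain ⟨c, hc, huc, hvc, hwc⟩ := hG.exists_center_of_isCollinear u.2 v.2 w.2 hvw huw huv
  have hcount := hG.encard_line_sdiff_add_four hxy hc huc hvc hwc
    (Subtype.coe_ne_coe.mp huv.1) (Subtype.coe_ne_coe.mp huw.1) (Subtype.coe_ne_coe.mp hvw.1)
  rw [hk] at hcount
  have hdeg (a : α) : 4 ≤ (G.neighborSet a).encard := by
    rw [hk, ← hcount]
    exact le_add_self
  rw [← hcount]
  congr 2
  ext z
  simp only [Set.mem_ofPred_eq, hG.dist_induce_farSet_eq_three_iff (hdeg z),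
    hG.isCollinear_triple_iff_of_center z.2 u.2 v.2 hc huc hvc hwc huv.1, Set.mem_sdiff,
    Set.mem_insert_iff, Set.mem_singleton_iff, not_or, ne_eq, Subtype.coe_inj]

end

/-- Lemma 2(d). In the distance-regular graph `Γ` induced by a Moore graph of
degree 57 on the common distance-2 neighbors of two adjacent vertices `x, y`, if `u, v, w` have
pairwise distances `d(v,w) = d(u,w) = d(u,v) = 3`, then there are exactly 53 vertices `z` at
distance 3 from all of `u`, `v`, `w`. -/
theorem moore57_x333_all_eq_three
    {α : Type*} [Fintype α] [DecidableEq α] (G : SimpleGraph α) [DecidableRel G.Adj]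
    (hG : G.IsSRGWith 3250 57 0 1)
    (x y : α) (hxy : G.Adj x y)
    (Γ : SimpleGraph {v : α | G.dist x v = 2 ∧ G.dist y v = 2})
    (hΓ : Γ = G.induce {v : α | G.dist x v = 2 ∧ G.dist y v = 2})
    (u v w : {v : α | G.dist x v = 2 ∧ G.dist y v = 2})
    (hU : Γ.dist v w = 3) (hV : Γ.dist u w = 3) (hW : Γ.dist u v = 3) :
    {z : {v : α | G.dist x v = 2 ∧ G.dist y v = 2} |
      Γ.dist z u = 3 ∧ Γ.dist z v = 3 ∧ Γ.dist z w = 3}.ncard = 53 := by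
  subst hΓ
  have hcount := moore57_x333_all_eq_three_general (.of_isSRGWith hG)
    (encard_neighborSet_of_isRegularOfDegree hG.regular) hxy u v w hU hV hW
  exact congrArg ENat.toNat <| ENat.add_left_injective_of_ne_top (n := 4) (by norm_num) <|
    hcount.trans (by norm_num : ((57 : ℕ) : ℕ∞) = 53 + 4)
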